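/- Let (r_1, r_2) be a consecutive pair of rows with supp(r_2) ⊆ supp(r_1) that satisfies the alternating sign condition. Let (r'_2, r'_1) be the result of the Case 1 row exchange. Then l(r'_1) = l(r_1) − C(r_2), η(r'_1) = (−1)^{C(r_2)} η(r_1), l(r'_2) = l(r_2), and η(r'_2) = (−1)^{C(r_1)+1} η(r_2). Moreover, the resulting pair (r'_2, r'_1) fails the alternating sign condition, i.e. η(r'_1) = −(−1)^{C(r'_2)} η(r'_2). -/

import Mathlib

/-- A row `r = (A, B, l, η)`: the data of an extended segment `([A, B], l, η)`
(with the constraints `B ≤ A` and `η ∈ {1, -1}` imposed as hypotheses via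
`IsRow`). Its support is the integer interval `[B, A]`. -/
structure Row where
  A : ℤ
  B : ℤ
  l : ℤ
  eta : ℤ
deriving DecidableEq

instance : Inhabited Row := ⟨⟨0, 0, 0, 1⟩⟩

/-- `(-1)^n` for an integer `n` (only the parity of `n` matters). -/
def epow (n : ℤ) : ℤ := (-1) ^ n.natAbs

/-- `b(r) = A - B + 1`, the length of the support of `r`. -/
def Row.b (r : Row) : ℤ := r.A - r.B + 1

/-- `C(r) = b(r) - 2l(r)`, the number of circles of `r`. -/
def Row.C (r : Row) : ℤ := r.b - 2 * r.l

/-- The defining constraints on a row: `B ≤ A` and `η ∈ {1, -1}`. -/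
def IsRow (r : Row) : Prop := r.B ≤ r.A ∧ (r.eta = 1 ∨ r.eta = -1)

/-- The ordered pair of consecutive rows `(r₁, r₂)` satisfies the alternating
sign condition: `η(r₂) = (-1)^{C(r₁)} η(r₁)`. -/
def Alt (r₁ r₂ : Row) : Prop := r₂.eta = epow r₁.C * r₁.eta

/-- Case 1 row exchange of the consecutive pair `(r₁, r₂)` (for
`supp(r₂) ⊆ supp(r₁)`); the result `(r₂', r₁')` is in the opposite order. -/
def exchange1 (r₁ r₂ : Row) : Row × Row :=
  let ε : ℤ := epow (r₁.A - r₁.B) * r₁.eta * r₂.eta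
  let c₂ : ℤ := r₂.b - 2 * r₂.l
  let s₂ : Row := ⟨r₂.A, r₂.B, r₂.l, epow (r₁.A - r₁.B) * r₂.eta⟩
  let s₁ : Row :=
    if ε = 1 ∧ r₁.b - 2 * r₁.l < 2 * c₂ then
      ⟨r₁.A, r₁.B, r₁.b - (r₁.l + c₂), epow (r₂.A - r₂.B) * r₁.eta⟩
    else if ε = 1 then
      ⟨r₁.A, r₁.B, r₁.l + c₂, epow (r₂.A - r₂.B + 1) * r₁.eta⟩
    else
      ⟨r₁.A, r₁.B, r₁.l - c₂, epow (r₂.A - r₂.B + 1) * r₁.eta⟩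
  (s₂, s₁)

/-- Case 2 row exchange of the consecutive pair `(r₁, r₂)` (for
`supp(r₁) ⊆ supp(r₂)`); the result `(r₂', r₁')` is in the opposite order. -/
def exchange2 (r₁ r₂ : Row) : Row × Row :=
  let ε : ℤ := epow (r₁.A - r₁.B) * r₁.eta * r₂.eta
  let c₁ : ℤ := r₁.b - 2 * r₁.l
  let s₁ : Row := ⟨r₁.A, r₁.B, r₁.l, epow (r₂.A - r₂.B) * r₁.eta⟩
  let s₂ : Row :=
    if ε = 1 ∧ r₂.b - 2 * r₂.l < 2 * c₁ then
      ⟨r₂.A, r₂.B, r₂.b - (r₂.l + c₁), epow (r₁.A - r₁.B) * r₂.eta⟩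
    else if ε = 1 then
      ⟨r₂.A, r₂.B, r₂.l + c₁, epow (r₁.A - r₁.B + 1) * r₂.eta⟩
    else
      ⟨r₂.A, r₂.B, r₂.l - c₁, epow (r₁.A - r₁.B + 1) * r₂.eta⟩
  (s₂, s₁)

/-! Since `(-1)^{C(r)} = -(-1)^{A - B}`, the sign `ε` equals `-(-1)^{C(r₁)} η₁ η₂`, which the
alternating sign condition turns into `-η₁²`. Hence `ε ≠ 1`: the exchange takes its last branch,
where the same parity identity expresses the new signs through `C(r₁)` and `C(r₂)`. -/

theorem epow_eq_negOnePow (n : ℤ) : epow n = n.negOnePow := by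
  rcases Int.even_or_odd n with hn | hn
  · rw [epow, (Int.natAbs_even.2 hn).neg_one_pow, Int.negOnePow_even n hn, Units.val_one]
  · rw [epow, (Int.natAbs_odd.2 hn).neg_one_pow, Int.negOnePow_odd n hn, Units.val_neg,
      Units.val_one]

theorem epow_succ (n : ℤ) : epow (n + 1) = -epow n := by
  simp only [epow_eq_negOnePow, Int.negOnePow_succ, Units.val_neg]

theorem epow_sub_two_mul (n k : ℤ) : epow (n - 2 * k) = epow n := by
  simp only [epow_eq_negOnePow, Int.negOnePow_sub, Int.negOnePow_two_mul, mul_one]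

theorem epow_mul_self (n : ℤ) : epow n * epow n = 1 := by
  rw [epow_eq_negOnePow, ← Units.val_mul, ← Int.negOnePow_add, Int.negOnePow_even _ ⟨n, rfl⟩,
    Units.val_one]

theorem epow_C (r : Row) : epow r.C = -epow (r.A - r.B) := by
  rw [Row.C, Row.b, epow_sub_two_mul, epow_succ]

theorem epow_C_add_one (r : Row) : epow (r.C + 1) = epow (r.A - r.B) := by
  rw [epow_succ, epow_C, neg_neg]

theorem exchange1_of_sign_ne_one {r₁ r₂ : Row}
    (hε : epow (r₁.A - r₁.B) * r₁.eta * r₂.eta ≠ 1) :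
    exchange1 r₁ r₂ =
      (⟨r₂.A, r₂.B, r₂.l, epow (r₁.C + 1) * r₂.eta⟩,
        ⟨r₁.A, r₁.B, r₁.l - r₂.C, epow r₂.C * r₁.eta⟩) := by
  rw [epow_C_add_one, epow_C, ← epow_succ]
  simp only [exchange1, hε, false_and, if_false, Row.C]

namespace Alt

variable {r₁ r₂ : Row}

theorem eta_left_eq (halt : Alt r₁ r₂) : r₁.eta = epow r₁.C * r₂.eta := by
  rw [halt, ← mul_assoc, epow_mul_self, one_mul]

theorem exchange_sign_eq (halt : Alt r₁ r₂) :
    epow (r₁.A - r₁.B) * r₁.eta * r₂.eta = -r₁.eta ^ 2 := by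
  calc epow (r₁.A - r₁.B) * r₁.eta * r₂.eta
      = -(r₁.eta * (epow r₁.C * r₂.eta)) := by rw [epow_C]; ring
    _ = -r₁.eta ^ 2 := by rw [← halt.eta_left_eq, sq]

theorem exchange1_eq (halt : Alt r₁ r₂) :
    exchange1 r₁ r₂ =
      (⟨r₂.A, r₂.B, r₂.l, epow (r₁.C + 1) * r₂.eta⟩,
        ⟨r₁.A, r₁.B, r₁.l - r₂.C, epow r₂.C * r₁.eta⟩) := by
  apply exchange1_of_sign_ne_one
  rw [halt.exchange_sign_eq]
  exact ((neg_nonpos.2 (sq_nonneg r₁.eta)).trans_lt one_pos).ne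

theorem epow_C_add_one_mul_eta_right (halt : Alt r₁ r₂) :
    epow (r₁.C + 1) * r₂.eta = -r₁.eta := by
  rw [epow_succ, neg_mul, ← halt.eta_left_eq]

theorem exchange1_snd_eta_eq_neg (halt : Alt r₁ r₂) :
    (exchange1 r₁ r₂).2.eta =
      -(epow (exchange1 r₁ r₂).1.C * (exchange1 r₁ r₂).1.eta) := by
  have hC : (exchange1 r₁ r₂).1.C = r₂.C := rfl
  rw [hC, halt.exchange1_eq, halt.epow_C_add_one_mul_eta_right, mul_neg, neg_neg]

end Alt

/-- Swap down (Lemma `swap down`): if `(r₁, r₂)` is a consecutive pair with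
`supp(r₂) ⊆ supp(r₁)` satisfying the alternating sign condition, and
`(r₂', r₁')` is the result of the Case 1 row exchange, then
`l(r₁') = l(r₁) − C(r₂)`, `η(r₁') = (−1)^{C(r₂)} η(r₁)`, `l(r₂') = l(r₂)`,
`η(r₂') = (−1)^{C(r₁)+1} η(r₂)`, and the pair `(r₂', r₁')` fails the
alternating sign condition. -/
theorem swap_down (r₁ r₂ : Row) (h₁ : IsRow r₁) (h₂ : IsRow r₂)
    (hsupp : r₁.B ≤ r₂.B ∧ r₂.A ≤ r₁.A) (halt : Alt r₁ r₂) :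
    let p := exchange1 r₁ r₂
    p.2.l = r₁.l - r₂.C ∧
    p.2.eta = epow r₂.C * r₁.eta ∧
    p.1.l = r₂.l ∧
    p.1.eta = epow (r₁.C + 1) * r₂.eta ∧
    p.2.eta = -(epow p.1.C * p.1.eta) := by
  refine ⟨?_, ?_, rfl, ?_, halt.exchange1_snd_eta_eq_neg⟩ <;> rw [halt.exchange1_eq]
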